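/- arXiv:math/0501247 — 2 statements merged into one kernel-verified Lean document; each statement's English description precedes it below -/
import Mathlib

section
/- Let A be a Poisson algebra over a field k of characteristic p > 2, and let ξ : A → A be a conformal derivation of weight λ ∈ k, i.e. a derivation of the commutative product satisfying ξ({x,y}) = {ξ(x), y} + {x, ξ(y)} − λ{x,y}. Suppose A carries a restricted Poisson structure x ↦ x^{[p]}. Then the map κ : A → A defined by κ(a) = (ξ − λ·id)(a^{[p]}) − (ad a)^{p-1}(ξ(a)) satisfies κ(a+b) = κ(a) + κ(b) and κ(ab) = a^p κ(b) + b^p κ(a) for all a, b ∈ A, and κ takes values in the Poisson center of A. -/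
/-! Universal quantized polynomials.  We model the free quantized algebra
`Q(x,y)` (the Rees algebra of the PBW filtration on the free associative
algebra on two generators) inside the polynomial ring in one central variable
`h` over the free associative algebra: `x` corresponds to `Xe = x·h`,
`y` to `Ye = y·h`, and `h` to the polynomial variable `he`. -/

/-- Ambient ring: polynomials in a central variable `h` over the free
associative `k`-algebra on two generators. -/
abbrev Amb (k : Type*) [Field k] : Type _ := Polynomial (FreeAlgebra k (Fin 2))

/-- The image of the generator `x` in the Rees-algebra model. -/
noncomputable def Xe (k : Type*) [Field k] : Amb k :=
  Polynomial.C (FreeAlgebra.ι k (0 : Fin 2)) * Polynomial.X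

/-- The image of the generator `y` in the Rees-algebra model. -/
noncomputable def Ye (k : Type*) [Field k] : Amb k :=
  Polynomial.C (FreeAlgebra.ι k (1 : Fin 2)) * Polynomial.X

/-- The central parameter `h` in the Rees-algebra model. -/
noncomputable def he (k : Type*) [Field k] : Amb k := Polynomial.X

/-- Evaluation relation for quantized polynomials.  `QEval k hA bra u v q w`
holds if the quantized polynomial `q` (an element of the free quantized algebra
on two generators `x, y`) evaluates to `w` when `x ↦ u`, `y ↦ v`, `h ↦ hA`,
products map to products, `k`-linear structure to `k`-linear structure, and the
universal bracket `{a,b}` (characterized by `h·{a,b} = a*b - b*a`) maps to the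
bracket `bra` of the target algebra. -/
inductive QEval (k : Type*) [Field k] {A : Type*} [Ring A] [Algebra k A]
    (hA : A) (bra : A → A → A) (u v : A) : Amb k → A → Prop
  | X : QEval k hA bra u v (Xe k) u
  | Y : QEval k hA bra u v (Ye k) v
  | h : QEval k hA bra u v (he k) hA
  | add {a b : Amb k} {x y : A} : QEval k hA bra u v a x → QEval k hA bra u v b y →
      QEval k hA bra u v (a + b) (x + y)
  | smul (c : k) {a : Amb k} {x : A} : QEval k hA bra u v a x →
      QEval k hA bra u v (c • a) (c • x)
  | mul {a b : Amb k} {x y : A} : QEval k hA bra u v a x → QEval k hA bra u v b y →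
      QEval k hA bra u v (a * b) (x * y)
  | bracket {a b c : Amb k} {x y : A} : QEval k hA bra u v a x → QEval k hA bra u v b y →
      he k * c = a * b - b * a → QEval k hA bra u v c (bra x y)

/-- `IsLval k p hA bra u v w` : `w` is the value at `(u, v)` of the universal
(Jacobson) polynomial `L(x,y)`, i.e. of the canonical quantized polynomial `L`
with `h^(p-1) · L = (x+y)^p - x^p - y^p` in the free quantized algebra. -/
def IsLval (k : Type*) [Field k] {A : Type*} [Ring A] [Algebra k A]
    (p : ℕ) (hA : A) (bra : A → A → A) (u v w : A) : Prop :=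
  ∃ L : Amb k, he k ^ (p - 1) * L = (Xe k + Ye k) ^ p - Xe k ^ p - Ye k ^ p ∧
    QEval k hA bra u v L w

/-- `IsPval k p hA bra u v w` : `w` is the value at `(u, v)` of the canonical
universal quantized polynomial `P(x,y)` with
`h^(p-1) · P = (x*y)^p - x^p * y^p` in the free quantized algebra. -/
def IsPval (k : Type*) [Field k] {A : Type*} [Ring A] [Algebra k A]
    (p : ℕ) (hA : A) (bra : A → A → A) (u v w : A) : Prop :=
  ∃ P : Amb k, he k ^ (p - 1) * P = (Xe k * Ye k) ^ p - Xe k ^ p * Ye k ^ p ∧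
    QEval k hA bra u v P w

/-!
The map `D = ξ - λ • id` is a derivation of the bracket, and since `(ad a) ^ (p - 1)` kills `a`,
`κ a = D (a ^ [p]) - (ad a) ^ (p - 1) (D a)`. In the semidirect sum of `A` with its derivations this
is `(ad a) ^ p D - [a ^ [p], D]`. Jacobson's formula for `(ad a + ad b) ^ p` therefore makes `κ`
additive, and since `(ad a) ^ p` is a derivation, `κ a` is central.

By additivity the product rule is the polarization of `κ (c ^ 2) = 2 c ^ p κ c`. For squares it can
be computed directly, because `P (c, c) = 0`: modulo quantized polynomials `h ^ (p - 1) * r` with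
`r (u, v, 0) = 0`, the `p`-th power is additive whenever `{u, v} = 0`, and expanding
`((x + y) ^ 2) ^ p` in two ways yields `(x y) ^ p ≡ x ^ p y ^ p`.
-/

section Characteristic

variable {p : ℕ}

theorem natCast_char_of_algebra (k : Type*) {R : Type*} [CommRing k] [CharP k p] [Ring R]
    [Algebra k R] : (p : R) = 0 := by
  rw [← map_natCast (algebraMap k R), CharP.cast_eq_zero, map_zero]

theorem two_ne_zero_of_char_ne_two (k : Type*) [Field k] [CharP k p] (hp : p ≠ 2) : (2 : k) ≠ 0 :=
  Ring.two_ne_zero (ringChar.eq k p ▸ hp)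

theorem eq_zero_of_eq_neg_of_module (k : Type*) {M : Type*} [Field k] [CharP k p]
    [AddCommGroup M] [Module k M] (hp : p ≠ 2) {x : M} (h : x = -x) : x = 0 := by
  rw [← smul_eq_zero_iff_right (two_ne_zero_of_char_ne_two k hp), two_smul,
    add_eq_zero_iff_eq_neg.mpr h]

end Characteristic

section LiePower

attribute [local instance] LieRing.ofAssociativeRing

variable {k R L L' : Type*} {p : ℕ}

theorem map_ad_pow [CommRing k] [LieRing L] [LieAlgebra k L] [LieRing L'] [LieAlgebra k L']
    (f : L →ₗ⁅k⁆ L') (x y : L) (n : ℕ) :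
    f ((LieAlgebra.ad k L x ^ n) y) = (LieAlgebra.ad k L' (f x) ^ n) (f y) := by
  induction n with
  | zero => rfl
  | succ n ih => simp only [pow_succ', Module.End.mul_apply, LieAlgebra.ad_apply, f.map_lie, ih]

theorem add_pow_char_of_commute_of_algebra (k : Type*) [CommRing k] [CharP k p] [Fact p.Prime]
    [Ring R] [Algebra k R] {x y : R} (h : Commute x y) : (x + y) ^ p = x ^ p + y ^ p := by
  simp only [h.add_pow_prime_eq Fact.out, natCast_char_of_algebra k, zero_mul, add_zero]

theorem ad_pow_char_apply [CommRing k] [CharP k p] [Fact p.Prime] [Ring R] [Algebra k R]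
    (c y : R) : (LieAlgebra.ad k R c ^ p) y = ⁅c ^ p, y⁆ := by
  have mulLeft_pow : LinearMap.mulLeft k c ^ p = LieAlgebra.ad k R c ^ p +
      LinearMap.mulRight k c ^ p := by
    have commute_mulLeft_mulRight := LinearMap.commute_mulLeft_right (R := k) c c
    rw [LieAlgebra.ad_eq_lmul_left_sub_lmul_right, Pi.sub_apply,
      ← add_pow_char_of_commute_of_algebra k
        (commute_mulLeft_mulRight.sub_left (Commute.refl _)), sub_add_cancel]
  rw [eq_sub_of_add_eq mulLeft_pow.symm, LinearMap.pow_mulLeft, LinearMap.pow_mulRight]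
  rfl

theorem ad_pow_char_lie [CommRing k] [CharP k p] [Fact p.Prime] [LieRing L] [LieAlgebra k L]
    (x y z : L) : (LieAlgebra.ad k L x ^ p) ⁅y, z⁆ =
      ⁅(LieAlgebra.ad k L x ^ p) y, z⁆ + ⁅y, (LieAlgebra.ad k L x ^ p) z⁆ := by
  have h := congrArg (· z) (map_ad_pow (LieAlgebra.ad k L) x y p)
  simp only [ad_pow_char_apply, LieRing.of_associative_ring_bracket, LinearMap.sub_apply,
    Module.End.mul_apply, LieAlgebra.ad_apply] at h
  rw [h, sub_add_cancel]

theorem map_pow_char_of_leibniz [CommRing k] [CharP k p] [Fact p.Prime] [Ring R] [Algebra k R]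
    (δ : R →ₗ[k] R) (hδ : ∀ x y, δ (x * y) = δ x * y + x * δ y) (c : R) :
    δ (c ^ p) = (LieAlgebra.ad k R c ^ (p - 1)) (δ c) := by
  let l := (Algebra.lmul k R).toLieHom
  have lie_mulLeft (x : R) : ⁅l x, -δ⁆ = l (δ x) := by
    ext y
    simp [l, LieRing.of_associative_ring_bracket, hδ]
  apply Algebra.lmul_injective (R := k)
  calc l (δ (c ^ p)) = ⁅l c ^ p, -δ⁆ := by
        rw [← lie_mulLeft]; exact congrArg (⁅·, -δ⁆) (map_pow (Algebra.lmul k R) c p)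
    _ = (LieAlgebra.ad k _ (l c) ^ (p - 1)) ⁅l c, -δ⁆ := by
        rw [← ad_pow_char_apply (k := k), ← LieAlgebra.ad_apply k, ← Module.End.mul_apply,
          ← pow_succ, Nat.sub_add_cancel (Fact.out : p.Prime).one_le]
    _ = l ((LieAlgebra.ad k R c ^ (p - 1)) (δ c)) := by rw [map_ad_pow, lie_mulLeft]

end LiePower

section Jacobson

attribute [local instance] LieRing.ofAssociativeRing

variable {k R L L' : Type*} {p : ℕ}

/-- The coefficient of `t ^ i` in `ad (t • a + b) ^ n` applied to `a`, for a formal central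
variable `t`. -/
def jacobsonCoeff [LieRing L] (a b : L) : ℕ → ℕ → L
  | 0, 0 => a
  | 0, _ + 1 => 0
  | n + 1, 0 => ⁅b, jacobsonCoeff a b n 0⁆
  | n + 1, i + 1 => ⁅a, jacobsonCoeff a b n i⁆ + ⁅b, jacobsonCoeff a b n (i + 1)⁆

/-- The Jacobson polynomial of characteristic `p`, which measures the failure of additivity of
the `p`-th power. -/
def jacobson (k : Type*) [Field k] (p : ℕ) [LieRing L] [LieAlgebra k L] (a b : L) : L :=
  ∑ i ∈ Finset.range (p - 1), ((i + 1 : ℕ) : k)⁻¹ • jacobsonCoeff a b (p - 1) i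

theorem map_jacobsonCoeff [CommRing k] [LieRing L] [LieAlgebra k L] [LieRing L'] [LieAlgebra k L']
    (f : L →ₗ⁅k⁆ L') (a b : L) :
    ∀ n i, f (jacobsonCoeff a b n i) = jacobsonCoeff (f a) (f b) n i
  | 0, 0 => rfl
  | 0, _ + 1 => f.map_zero
  | n + 1, 0 => by simp only [jacobsonCoeff, f.map_lie, map_jacobsonCoeff f a b n]
  | n + 1, i + 1 => by simp only [jacobsonCoeff, map_add, f.map_lie, map_jacobsonCoeff f a b n]

theorem map_jacobson [Field k] [LieRing L] [LieAlgebra k L] [LieRing L'] [LieAlgebra k L']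
    (f : L →ₗ⁅k⁆ L') (a b : L) : f (jacobson k p a b) = jacobson k p (f a) (f b) := by
  simp only [jacobson, map_sum, map_smul, map_jacobsonCoeff]

theorem jacobsonCoeff_eq_zero_of_lie_eq_zero [LieRing L] {a b : L} (h : ⁅b, a⁆ = 0) :
    ∀ n i, jacobsonCoeff a b (n + 1) i = 0
  | 0, 0 => h
  | 0, 1 => by simp [jacobsonCoeff]
  | 0, i + 2 => by simp [jacobsonCoeff]
  | n + 1, 0 => by rw [jacobsonCoeff, jacobsonCoeff_eq_zero_of_lie_eq_zero h, lie_zero]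
  | n + 1, i + 1 => by
    rw [jacobsonCoeff, jacobsonCoeff_eq_zero_of_lie_eq_zero h,
      jacobsonCoeff_eq_zero_of_lie_eq_zero h, lie_zero, lie_zero, add_zero]

theorem jacobson_eq_zero_of_lie_eq_zero [Field k] [LieRing L] [LieAlgebra k L] {a b : L}
    (h : ⁅b, a⁆ = 0) : jacobson k p a b = 0 := by
  refine Finset.sum_eq_zero fun i hi => ?_
  obtain ⟨n, hn⟩ := Nat.exists_eq_succ_of_ne_zero (Finset.mem_range.mp hi).ne_bot
  rw [hn, jacobsonCoeff_eq_zero_of_lie_eq_zero h, smul_zero]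

open Polynomial

theorem coeff_zero_lie_linear [Ring R] (a b : R) (q : R[X]) :
    ⁅C a * X + C b, q⁆.coeff 0 = ⁅b, q.coeff 0⁆ := by
  simp [LieRing.of_associative_ring_bracket, mul_coeff_zero]

theorem coeff_succ_lie_linear [Ring R] (a b : R) (q : R[X]) (i : ℕ) :
    ⁅C a * X + C b, q⁆.coeff (i + 1) = ⁅a, q.coeff i⁆ + ⁅b, q.coeff (i + 1)⁆ := by
  have left_mul : (C a * X + C b) * q = C a * q * X + C b * q := by
    rw [add_mul, mul_assoc, X_mul, ← mul_assoc]
  rw [LieRing.of_associative_ring_bracket, left_mul, mul_add, ← mul_assoc q]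
  simp only [LieRing.of_associative_ring_bracket, coeff_sub, coeff_add, coeff_mul_X, coeff_C_mul,
    coeff_mul_C]
  abel

theorem coeff_ad_pow_linear [CommRing k] [Ring R] [Algebra k R] (a b : R) :
    ∀ n i, ((LieAlgebra.ad k R[X] (C a * X + C b) ^ n) (C a)).coeff i = jacobsonCoeff a b n i
  | 0, 0 => coeff_C_zero
  | 0, i + 1 => coeff_C_succ
  | n + 1, 0 => by
    rw [pow_succ', Module.End.mul_apply, LieAlgebra.ad_apply, coeff_zero_lie_linear,
      coeff_ad_pow_linear a b n, jacobsonCoeff]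
  | n + 1, i + 1 => by
    rw [pow_succ', Module.End.mul_apply, LieAlgebra.ad_apply, coeff_succ_lie_linear,
      coeff_ad_pow_linear a b n, coeff_ad_pow_linear a b n, jacobsonCoeff]

theorem add_pow_eq_sum_coeff [Semiring R] (a b : R) (n : ℕ) :
    (a + b) ^ (n + 1) =
      a ^ (n + 1) + b ^ (n + 1) +
        ∑ i ∈ Finset.range n, ((C a * X + C b) ^ (n + 1)).coeff (i + 1) := by
  let evalOne := eval₂RingHom' (RingHom.id R) 1 fun r => Commute.one_right r
  have natDegree_le : (C a * X + C b).natDegree ≤ 1 := natDegree_linear_le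
  have coeff_top : ((C a * X + C b) ^ (n + 1)).coeff (n + 1) = a ^ (n + 1) := by
    simpa using coeff_pow_of_natDegree_le natDegree_le (m := n + 1)
  have coeff_bot : ((C a * X + C b) ^ (n + 1)).coeff 0 = b ^ (n + 1) := by
    rw [← constantCoeff_apply, map_pow]
    simp
  calc (a + b) ^ (n + 1) = evalOne ((C a * X + C b) ^ (n + 1)) := by
        rw [map_pow]; simp [evalOne, eval₂RingHom']
    _ = ∑ i ∈ Finset.range (n + 2), ((C a * X + C b) ^ (n + 1)).coeff i := by
        have natDegree_pow_lt : ((C a * X + C b) ^ (n + 1)).natDegree < n + 2 := by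
          simpa [Nat.lt_succ_iff] using natDegree_pow_le_of_le (n + 1) natDegree_le
        refine (eval₂_eq_sum_range' (RingHom.id R) natDegree_pow_lt 1).trans ?_
        simp only [RingHom.id_apply, one_pow, mul_one]
    _ = _ := by
        rw [Finset.sum_range_succ, Finset.sum_range_succ', coeff_top, coeff_bot]
        abel

/-- Differentiating `(at + b) ^ p` in `t` gives `ad (at + b) ^ (p - 1)` applied to `a`. -/
theorem add_pow_char_eq_jacobson [Field k] [CharP k p] [Fact p.Prime] [Ring R] [Algebra k R]
    (a b : R) : (a + b) ^ p = a ^ p + b ^ p + jacobson k p a b := by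
  let c : R[X] := C a * X + C b
  have hp : p - 1 + 1 = p := Nat.sub_add_cancel (Fact.out : p.Prime).one_le
  have derivative_pow : derivative (c ^ p) = (LieAlgebra.ad k R[X] c ^ (p - 1)) (C a) := by
    have derivative_c : derivative c = C a := by simp [c]
    rw [← derivative_c]
    exact map_pow_char_of_leibniz (derivative.restrictScalars k) (fun _ _ => derivative_mul) c
  have coeff_pow (i : ℕ) (hi : i ∈ Finset.range (p - 1)) :
      (c ^ p).coeff (i + 1) = ((i + 1 : ℕ) : k)⁻¹ • jacobsonCoeff a b (p - 1) i := by
    have cast_ne_zero : ((i + 1 : ℕ) : k) ≠ 0 := by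
      rw [Ne, CharP.cast_eq_zero_iff k p]
      exact Nat.not_dvd_of_pos_of_lt i.succ_pos (by grind)
    rw [eq_inv_smul_iff₀ cast_ne_zero, ← coeff_ad_pow_linear (k := k), ← derivative_pow,
      coeff_derivative, Nat.cast_smul_eq_nsmul, nsmul_eq_mul', Nat.cast_add_one]
  have h := add_pow_eq_sum_coeff a b (p - 1)
  rw [hp] at h
  rw [h, jacobson, Finset.sum_congr rfl coeff_pow]

end Jacobson

section LieDerivation

open LieAlgebra SemiDirectSum

attribute [local instance] LieRing.ofAssociativeRing

variable {k L : Type*} {p : ℕ} [LieRing L]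

/-- The semidirect sum of a Lie algebra with its derivations, in which every derivation becomes
inner. -/
abbrev Holomorph (k L : Type*) [CommRing k] [LieRing L] [LieAlgebra k L] :=
  L ⋊⁅(LieHom.id : LieDerivation k L L →ₗ⁅k⁆ LieDerivation k L L)⁆ LieDerivation k L L

theorem lie_inr_inl [CommRing k] [LieAlgebra k L] (D : LieDerivation k L L) (x : L) :
    (⁅inr LieHom.id D, inl LieHom.id x⁆ : Holomorph k L) = inl LieHom.id (D x) := by
  simp

theorem ad_inl_pow_inr [CommRing k] [LieAlgebra k L] (D : LieDerivation k L L) (x : L) {n : ℕ}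
    (hn : n ≠ 0) :
    (ad k (Holomorph k L) (inl LieHom.id x) ^ n) (inr LieHom.id D) =
      -inl LieHom.id ((ad k L x ^ (n - 1)) (D x)) := by
  obtain ⟨n, rfl⟩ := Nat.exists_eq_succ_of_ne_zero hn
  rw [pow_succ, Module.End.mul_apply, ad_apply, ← lie_skew, lie_inr_inl, map_neg, map_ad_pow]
  rfl

theorem lieDerivation_jacobson [Field k] [LieAlgebra k L] [CharP k p] [Fact p.Prime]
    (D : LieDerivation k L L) (a b : L) :
    D (jacobson k p a b) = (ad k L (a + b) ^ (p - 1)) (D (a + b)) -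
      (ad k L a ^ (p - 1)) (D a) - (ad k L b ^ (p - 1)) (D b) := by
  let φ := (ad k (Holomorph k L)).comp (inl LieHom.id)
  have φ_pow (x : L) : (φ x ^ p) (inr LieHom.id D) =
      -inl LieHom.id ((ad k L x ^ (p - 1)) (D x)) :=
    ad_inl_pow_inr D x (Fact.out : p.Prime).ne_zero
  have φ_jacobson : φ (jacobson k p a b) = φ (a + b) ^ p - φ a ^ p - φ b ^ p := by
    rw [map_add, add_pow_char_eq_jacobson (k := k), map_jacobson]
    abel
  apply inl_injective (R := k) (L := LieDerivation k L L) LieHom.id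
  calc inl LieHom.id (D (jacobson k p a b)) = -φ (jacobson k p a b) (inr LieHom.id D) := by
        rw [← lie_inr_inl, ← lie_skew]
        rfl
    _ = _ := by
        rw [φ_jacobson, LinearMap.sub_apply, LinearMap.sub_apply, φ_pow, φ_pow, φ_pow, map_sub,
          map_sub]
        abel

theorem lie_lieDerivation_sub_ad_pow_eq_zero [CommRing k] [LieAlgebra k L] [CharP k p]
    [Fact p.Prime] (D : LieDerivation k L L) {a s : L} (hs : ∀ y, ⁅s, y⁆ = (ad k L a ^ p) y)
    (g : L) : ⁅D s - (ad k L a ^ (p - 1)) (D a), g⁆ = 0 := by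
  have h := ad_pow_char_lie (k := k) (p := p) (inl LieHom.id a) (inr LieHom.id D : Holomorph k L)
    (inl LieHom.id g)
  rw [ad_inl_pow_inr D a (Fact.out : p.Prime).ne_zero, lie_inr_inl, ← map_ad_pow, ← map_ad_pow,
    lie_inr_inl, ← hs, ← hs, neg_lie, ← LieHom.map_lie, ← map_neg, ← map_add] at h
  have lie_D : ⁅s, D g⁆ = -⁅(ad k L a ^ (p - 1)) (D a), g⁆ + D ⁅s, g⁆ := inl_injective _ h
  rw [D.apply_lie_eq_add, ← sub_eq_zero] at lie_D
  rw [sub_lie, ← neg_eq_zero, ← lie_D]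
  abel

end LieDerivation

section QuantizedPolynomials

open LieAlgebra

attribute [local instance] LieRing.ofAssociativeRing

variable {k A : Type*} [Field k] [Ring A] [Algebra k A] {hA : A} {bra : A → A → A} {u v : A}

theorem commute_he_pow (n : ℕ) (q : Amb k) : Commute (he k ^ n) q :=
  Polynomial.X_pow_mul

theorem he_mul_injective : Function.Injective (he k * ·) :=
  Polynomial.isRegular_X.left

theorem he_mul_pow (q : Amb k) (n : ℕ) : (he k * q) ^ n = he k ^ n * q ^ n :=
  Commute.mul_pow (Polynomial.X_mul) n

theorem he_pow_mul_lie_he_mul (n : ℕ) (q r : Amb k) :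
    ⁅he k ^ n * q, he k * r⁆ = he k ^ n * (he k * ⁅q, r⁆) := by
  have he_comm := commute_he_pow (k := k) 1
  rw [pow_one] at he_comm
  rw [LieRing.of_associative_ring_bracket, LieRing.of_associative_ring_bracket,
    (he_comm q).symm.mul_mul_mul_comm, (commute_he_pow n r).symm.mul_mul_mul_comm,
    (he_comm (he k ^ n)).eq, ← mul_sub, mul_assoc]

theorem he_mul_lie_he_mul (q r : Amb k) : ⁅he k * q, he k * r⁆ = he k * (he k * ⁅q, r⁆) := by
  simpa only [pow_one] using he_pow_mul_lie_he_mul 1 q r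

namespace QEval

theorem zero : QEval k hA bra u v 0 0 := by
  simpa using (X : QEval k hA bra u v (Xe k) u).smul 0

theorem sum {ι : Type*} (s : Finset ι) {q : ι → Amb k} {x : ι → A}
    (h : ∀ i ∈ s, QEval k hA bra u v (q i) (x i)) :
    QEval k hA bra u v (∑ i ∈ s, q i) (∑ i ∈ s, x i) := by
  classical
  induction s using Finset.induction_on with
  | empty => exact zero
  | insert i s hi ih =>
    rw [Finset.sum_insert hi, Finset.sum_insert hi]
    exact (h i (Finset.mem_insert_self i s)).add
      (ih fun j hj => h j (Finset.mem_insert_of_mem hj))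

theorem pow {a : Amb k} {x : A} (ha : QEval k hA bra u v a x) :
    ∀ {n : ℕ}, n ≠ 0 → QEval k hA bra u v (a ^ n) (x ^ n)
  | 1, _ => by simpa using ha
  | n + 2, _ => by simpa only [pow_succ] using (ha.pow n.succ_ne_zero).mul ha

theorem he_mul_lie {q r : Amb k} {x y : A} (hq : QEval k hA bra u v (he k * q) x)
    (hr : QEval k hA bra u v (he k * r) y) :
    QEval k hA bra u v (he k * ⁅q, r⁆) (bra x y) :=
  hq.bracket hr (he_mul_lie_he_mul q r).symm

theorem he_dvd {q : Amb k} {x : A} (hq : QEval k hA bra u v q x) : he k ∣ q := by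
  induction hq with
  | X => exact ⟨_, Polynomial.X_mul.symm⟩
  | Y => exact ⟨_, Polynomial.X_mul.symm⟩
  | h => exact dvd_rfl
  | add _ _ iha ihb => exact dvd_add iha ihb
  | smul c _ iha =>
    obtain ⟨q, rfl⟩ := iha
    exact ⟨c • q, (mul_smul_comm c _ q).symm⟩
  | mul _ _ iha _ => exact iha.mul_right _
  | bracket _ _ hc iha ihb =>
    obtain ⟨q, rfl⟩ := iha
    obtain ⟨r, rfl⟩ := ihb
    exact ⟨⁅q, r⁆, he_mul_injective (hc.trans (he_mul_lie_he_mul q r))⟩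

theorem he_mul_ad_pow {q r : Amb k} {x y : A} (hq : QEval k hA bra u v (he k * q) x)
    (hr : QEval k hA bra u v (he k * r) y) :
    ∀ n : ℕ, QEval k hA bra u v (he k * (ad k (Amb k) q ^ n) r) ((bra x)^[n] y)
  | 0 => hr
  | n + 1 => by
    rw [pow_succ', Module.End.mul_apply, ad_apply, Function.iterate_succ_apply']
    exact hq.he_mul_lie (hq.he_mul_ad_pow hr n)

end QEval

end QuantizedPolynomials

section PoissonEvaluation

open LieAlgebra

-- The class `PoissonRing` comes after this line so that its bracket takes precedence over the
-- (vanishing) commutator bracket of the underlying commutative ring.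
attribute [local instance] LieRing.ofAssociativeRing

/-- A commutative ring with a Lie bracket which is a derivation of the product in each variable. -/
class PoissonRing (A : Type*) extends CommRing A, LieRing A where
  lie_mul (x y z : A) : ⁅x, y * z⁆ = ⁅x, y⁆ * z + y * ⁅x, z⁆

/-- A Poisson ring which is an algebra over `k` with `k`-bilinear bracket. -/
class PoissonAlgebra (k A : Type*) [CommRing k] [PoissonRing A] extends Algebra k A where
  lie_smul (c : k) (x y : A) : ⁅x, c • y⁆ = c • ⁅x, y⁆

instance (k A : Type*) [CommRing k] [PoissonRing A] [PoissonAlgebra k A] : LieAlgebra k A where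
  lie_smul := PoissonAlgebra.lie_smul

variable {k A : Type*} [Field k] [PoissonRing A] [PoissonAlgebra k A] {p : ℕ} {hA u v : A}

namespace QEval

theorem he_mul_jacobsonCoeff {q r : Amb k} {x y : A}
    (hq : QEval k hA Bracket.bracket u v (he k * q) x)
    (hr : QEval k hA Bracket.bracket u v (he k * r) y) :
    ∀ n i, QEval k hA Bracket.bracket u v (he k * jacobsonCoeff q r n i) (jacobsonCoeff x y n i)
  | 0, 0 => hq
  | 0, _ + 1 => by simpa only [jacobsonCoeff, mul_zero] using zero
  | n + 1, 0 => hr.he_mul_lie (hq.he_mul_jacobsonCoeff hr n 0)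
  | n + 1, i + 1 => by
    rw [jacobsonCoeff, mul_add]
    exact (hq.he_mul_lie (hq.he_mul_jacobsonCoeff hr n i)).add
      (hr.he_mul_lie (hq.he_mul_jacobsonCoeff hr n (i + 1)))

theorem he_mul_jacobson {q r : Amb k} {x y : A}
    (hq : QEval k hA Bracket.bracket u v (he k * q) x)
    (hr : QEval k hA Bracket.bracket u v (he k * r) y) :
    QEval k hA Bracket.bracket u v (he k * jacobson k p q r) (jacobson k p x y) := by
  rw [jacobson, Finset.mul_sum]
  refine QEval.sum _ fun i _ => ?_
  rw [mul_smul_comm]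
  exact (hq.he_mul_jacobsonCoeff hr _ i).smul _

theorem exists_add_pow_sub [CharP k p] [Fact p.Prime] {q r : Amb k} {x y : A}
    (hq : QEval k hA Bracket.bracket u v q x) (hr : QEval k hA Bracket.bracket u v r y) :
    ∃ L, he k ^ (p - 1) * L = (q + r) ^ p - q ^ p - r ^ p ∧
      QEval k hA Bracket.bracket u v L (jacobson k p x y) := by
  obtain ⟨q, rfl⟩ := hq.he_dvd
  obtain ⟨r, rfl⟩ := hr.he_dvd
  refine ⟨_, ?_, hq.he_mul_jacobson hr⟩
  rw [← mul_add, he_mul_pow, he_mul_pow, he_mul_pow, add_pow_char_eq_jacobson (k := k),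
    ← mul_assoc, ← pow_succ, Nat.sub_add_cancel (Fact.out : p.Prime).one_le]
  noncomm_ring

theorem lie_eq_zero_of_generators {q : Amb k} {x z : A}
    (hq : QEval k 0 Bracket.bracket u v q x) (hu : ⁅u, z⁆ = 0) (hv : ⁅v, z⁆ = 0) : ⁅x, z⁆ = 0 := by
  induction hq with
  | X => exact hu
  | Y => exact hv
  | h => exact zero_lie z
  | add _ _ ihx ihy => rw [add_lie, ihx, ihy, add_zero]
  | smul c _ ihx => rw [smul_lie, ihx, smul_zero]
  | mul _ _ ihx ihy =>
    rw [← lie_skew, PoissonRing.lie_mul, ← lie_skew, ihx, ← lie_skew, ihy]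
    simp
  | bracket _ _ _ ihx ihy => rw [lie_lie, ihx, ihy, lie_zero, lie_zero, sub_zero]

theorem lie_eq_zero {q r : Amb k} {x y : A} (hq : QEval k 0 Bracket.bracket u v q x)
    (hr : QEval k 0 Bracket.bracket u v r y) (huv : ⁅u, v⁆ = 0) : ⁅x, y⁆ = 0 := by
  have hvu : ⁅v, u⁆ = 0 := by rw [← lie_skew, huv, neg_zero]
  have lie_generator (z : A) (hu : ⁅u, z⁆ = 0) (hv : ⁅v, z⁆ = 0) : ⁅z, y⁆ = 0 := by
    rw [← lie_skew, hr.lie_eq_zero_of_generators hu hv, neg_zero]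
  exact hq.lie_eq_zero_of_generators (lie_generator u (lie_self u) hvu)
    (lie_generator v huv (lie_self v))

end QEval

theorem isLval_jacobson [CharP k p] [Fact p.Prime] (u v : A) :
    IsLval k p hA Bracket.bracket u v (jacobson k p u v) :=
  QEval.X.exists_add_pow_sub QEval.Y

/-- The multiples by `h ^ (p - 1)` of the quantized polynomials which vanish at `(u, v, 0)`. -/
def vanishing (k : Type*) [Field k] [PoissonAlgebra k A] (p : ℕ) (u v : A) :
    Submodule k (Amb k) where
  carrier := {q | ∃ r, he k ^ (p - 1) * r = q ∧ QEval k 0 Bracket.bracket u v r 0}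
  zero_mem' := ⟨0, mul_zero _, QEval.zero⟩
  add_mem' := by
    rintro _ _ ⟨r, rfl, hr⟩ ⟨s, rfl, hs⟩
    exact ⟨r + s, mul_add _ _ _, by simpa using hr.add hs⟩
  smul_mem' := by
    rintro c _ ⟨r, rfl, hr⟩
    exact ⟨c • r, mul_smul_comm _ _ _, by simpa using hr.smul c⟩

section Congruence

variable {q r q' r' : Amb k} {x y : A}

theorem smodEq_mul (hq : QEval k 0 Bracket.bracket u v q x)
    (hr' : QEval k 0 Bracket.bracket u v r' y) (h : q ≡ q' [SMOD vanishing k p u v])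
    (h' : r ≡ r' [SMOD vanishing k p u v]) : q * r ≡ q' * r' [SMOD vanishing k p u v] := by
  rw [SModEq.sub_mem] at h h' ⊢
  obtain ⟨s, hs, hseval⟩ := h
  obtain ⟨s', hs', hseval'⟩ := h'
  refine ⟨q * s' + s * r', ?_, by simpa using (hq.mul hseval').add (hseval.mul hr')⟩
  rw [mul_add, ← mul_assoc, (commute_he_pow _ q).eq, mul_assoc, ← mul_assoc _ s, hs, hs',
    mul_sub, sub_mul, sub_add_sub_cancel]

theorem he_pow_mul_smodEq_zero [Fact p.Prime] (hq : QEval k 0 Bracket.bracket u v q x) :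
    he k ^ p * q ≡ 0 [SMOD vanishing k p u v] := by
  refine SModEq.zero.mpr ⟨he k * q, ?_, by simpa using QEval.h.mul hq⟩
  rw [← mul_assoc, ← pow_succ, Nat.sub_add_cancel (Fact.out : p.Prime).one_le]

theorem add_pow_smodEq [CharP k p] [Fact p.Prime] (huv : ⁅u, v⁆ = 0)
    (hq : QEval k 0 Bracket.bracket u v q x) (hr : QEval k 0 Bracket.bracket u v r y) :
    (q + r) ^ p ≡ q ^ p + r ^ p [SMOD vanishing k p u v] := by
  obtain ⟨L, hL, hLeval⟩ := hq.exists_add_pow_sub (p := p) hr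
  rw [jacobson_eq_zero_of_lie_eq_zero (hr.lie_eq_zero hq huv)] at hLeval
  exact SModEq.sub_mem.mpr ⟨L, by rw [hL, sub_sub], hLeval⟩

theorem pow_mul_comm_smodEq [CharP k p] [Fact p.Prime] (hq : QEval k 0 Bracket.bracket u v q x)
    (hr : QEval k 0 Bracket.bracket u v r y) :
    q ^ p * r ≡ r * q ^ p [SMOD vanishing k p u v] := by
  obtain ⟨q, rfl⟩ := hq.he_dvd
  obtain ⟨r, rfl⟩ := hr.he_dvd
  rw [← sub_smodEq_zero, ← LieRing.of_associative_ring_bracket, he_mul_pow, he_pow_mul_lie_he_mul,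
    ← ad_pow_char_apply (k := k)]
  exact he_pow_mul_smodEq_zero (hq.he_mul_ad_pow hr p)

theorem mul_pow_comm_smodEq [CharP k p] [Fact p.Prime] (huv : ⁅u, v⁆ = 0)
    (hq : QEval k 0 Bracket.bracket u v q x) (hr : QEval k 0 Bracket.bracket u v r y) :
    (q * r) ^ p ≡ (r * q) ^ p [SMOD vanishing k p u v] := by
  obtain ⟨q, rfl⟩ := hq.he_dvd
  obtain ⟨r, rfl⟩ := hr.he_dvd
  have hqr := hq.he_mul_lie hr
  calc (he k * q * (he k * r)) ^ p
      = (he k * r * (he k * q) + he k * (he k * ⁅q, r⁆)) ^ p := by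
        rw [← he_mul_lie_he_mul, LieRing.of_associative_ring_bracket, add_sub_cancel]
    _ ≡ (he k * r * (he k * q)) ^ p + he k ^ p * (he k * ⁅q, r⁆) ^ p [SMOD vanishing k p u v] := by
        rw [← he_mul_pow]
        exact add_pow_smodEq huv (hr.mul hq) (QEval.h.mul hqr)
    _ ≡ (he k * r * (he k * q)) ^ p + 0 [SMOD vanishing k p u v] :=
        SModEq.rfl.add (he_pow_mul_smodEq_zero (hqr.pow (Fact.out : p.Prime).ne_zero))
    _ = (he k * r * (he k * q)) ^ p := add_zero _

/-- Polarization: expand the `p`-th power of `(q + r) ^ 2` in two ways. -/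
theorem mul_pow_smodEq [CharP k p] [Fact p.Prime] (hp : p ≠ 2) (huv : ⁅u, v⁆ = 0)
    (hq : QEval k 0 Bracket.bracket u v q x) (hr : QEval k 0 Bracket.bracket u v r y) :
    (q * r) ^ p ≡ q ^ p * r ^ p [SMOD vanishing k p u v] := by
  have hqp := hq.pow (Fact.out : p.Prime).ne_zero
  have hrp := hr.pow (Fact.out : p.Prime).ne_zero
  have mul_self_pow (s : Amb k) : (s * s) ^ p = s ^ p * s ^ p := (Commute.refl s).mul_pow p
  have square : q ^ p * q ^ p + r ^ p * r ^ p + ((q * r) ^ p + (r * q) ^ p) ≡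
      q ^ p * q ^ p + r ^ p * r ^ p + (q ^ p * r ^ p + r ^ p * q ^ p) [SMOD vanishing k p u v] :=
    calc q ^ p * q ^ p + r ^ p * r ^ p + ((q * r) ^ p + (r * q) ^ p)
        ≡ (q * q + r * r) ^ p + (q * r + r * q) ^ p [SMOD vanishing k p u v] := by
          rw [← mul_self_pow, ← mul_self_pow]
          exact ((add_pow_smodEq huv (hq.mul hq) (hr.mul hr)).add
            (add_pow_smodEq huv (hq.mul hr) (hr.mul hq))).symm
      _ ≡ (q * q + r * r + (q * r + r * q)) ^ p [SMOD vanishing k p u v] :=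
          (add_pow_smodEq huv ((hq.mul hq).add (hr.mul hr)) ((hq.mul hr).add (hr.mul hq))).symm
      _ = (q + r) ^ p * (q + r) ^ p := by
          rw [← mul_self_pow]
          noncomm_ring
      _ ≡ (q ^ p + r ^ p) * (q ^ p + r ^ p) [SMOD vanishing k p u v] :=
          smodEq_mul ((hq.add hr).pow (Fact.out : p.Prime).ne_zero) (hqp.add hrp)
            (add_pow_smodEq huv hq hr) (add_pow_smodEq huv hq hr)
      _ = _ := by noncomm_ring
  have double : (2 : k) • (q * r) ^ p ≡ (2 : k) • (q ^ p * r ^ p) [SMOD vanishing k p u v] := by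
    rw [two_smul, two_smul]
    calc (q * r) ^ p + (q * r) ^ p
        ≡ (q * r) ^ p + (r * q) ^ p [SMOD vanishing k p u v] :=
          SModEq.rfl.add (mul_pow_comm_smodEq huv hq hr)
      _ ≡ q ^ p * r ^ p + r ^ p * q ^ p [SMOD vanishing k p u v] := by
          simpa using square.sub (SModEq.refl (q ^ p * q ^ p + r ^ p * r ^ p))
      _ ≡ q ^ p * r ^ p + q ^ p * r ^ p [SMOD vanishing k p u v] :=
          SModEq.rfl.add (pow_mul_comm_smodEq hq hrp).symm
  simpa only [inv_smul_smul₀ (two_ne_zero_of_char_ne_two k hp)] using double.smul (2 : k)⁻¹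

end Congruence

theorem isPval_zero_of_lie_eq_zero [CharP k p] [Fact p.Prime] (hp : p ≠ 2) (huv : ⁅u, v⁆ = 0) :
    IsPval k p 0 Bracket.bracket u v 0 :=
  SModEq.sub_mem.mp (mul_pow_smodEq hp huv QEval.X QEval.Y)

end PoissonEvaluation

section ConformalDerivation

open LieAlgebra

variable {k A : Type*} {p : ℕ} [PoissonRing A]

theorem mul_lie_poisson (x y z : A) : ⁅x * y, z⁆ = x * ⁅y, z⁆ + ⁅x, z⁆ * y := by
  rw [← lie_skew, PoissonRing.lie_mul, ← lie_skew x, ← lie_skew y]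
  ring

theorem ad_pow_mul_of_lie_eq_zero [CommRing k] [PoissonAlgebra k A] {x c : A} (h : ⁅x, c⁆ = 0)
    (z : A) (n : ℕ) : (ad k A x ^ n) (c * z) = c * (ad k A x ^ n) z := by
  induction n with
  | zero => rfl
  | succ n ih =>
    simp only [pow_succ', Module.End.mul_apply, ad_apply, ih, PoissonRing.lie_mul, h, zero_mul,
      zero_add]

theorem ad_mul_self_pow [CommRing k] [PoissonAlgebra k A] (c z : A) (n : ℕ) :
    (ad k A (c * c) ^ n) z = (c + c) ^ n * (ad k A c ^ n) z := by
  have lie_add_self : ⁅c * c, c + c⁆ = 0 := by simp [mul_lie_poisson]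
  induction n generalizing z with
  | zero => simp
  | succ n ih =>
    have lie_mul_self : ⁅c * c, z⁆ = (c + c) * ⁅c, z⁆ := by
      rw [mul_lie_poisson]
      ring
    rw [pow_succ, Module.End.mul_apply, ad_apply, lie_mul_self,
      ad_pow_mul_of_lie_eq_zero lie_add_self, ih, pow_succ (ad k A c), Module.End.mul_apply,
      ad_apply, pow_succ', mul_assoc]

/-- A derivation of the commutative product of a Poisson algebra which is a derivation of the
bracket up to `-lam` times the bracket. -/
structure ConformalDerivation (k A : Type*) [CommRing k] [PoissonRing A] [PoissonAlgebra k A]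
    (lam : k) extends Derivation k A A where
  map_lie (x y : A) :
    toDerivation ⁅x, y⁆ = ⁅toDerivation x, y⁆ + ⁅x, toDerivation y⁆ - lam • ⁅x, y⁆

/-- `pf` is a restricted Poisson structure `x ↦ x^[p]`. -/
structure IsRestrictedPoisson (k : Type*) {A : Type*} [Field k] [PoissonRing A]
    [PoissonAlgebra k A] (p : ℕ) (pf : A → A) : Prop where
  lie_map (x y : A) : ⁅pf x, y⁆ = (ad k A x ^ p) y
  map_smul (c : k) (x : A) : pf (c • x) = c ^ p • pf x
  map_add (x y w : A) : IsLval k p 0 Bracket.bracket x y w → pf (x + y) = pf x + pf y + w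
  map_mul (x y w : A) : IsPval k p 0 Bracket.bracket x y w →
    pf (x * y) = x ^ p * pf y + pf x * y ^ p + w

namespace ConformalDerivation

section Definitions

variable [CommRing k] [PoissonAlgebra k A] {lam : k}

/-- The derivation `ξ - lam • id` of the bracket. -/
def toLieDerivation (ξ : ConformalDerivation k A lam) : LieDerivation k A A where
  toLinearMap := ξ.toLinearMap - lam • LinearMap.id
  leibniz' x y := by
    have map_lie : ξ.toLinearMap ⁅x, y⁆ =
        ⁅ξ.toLinearMap x, y⁆ + ⁅x, ξ.toLinearMap y⁆ - lam • ⁅x, y⁆ := ξ.map_lie x y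
    simp only [LinearMap.sub_apply, LinearMap.smul_apply, LinearMap.id_apply, map_lie, lie_sub,
      sub_lie, smul_lie, lie_smul, ← lie_skew y]
    abel

/-- The map `κ`, measuring the failure of `ξ` to be compatible with `pf`. -/
def kappa (ξ : ConformalDerivation k A lam) (p : ℕ) (pf : A → A) (a : A) : A :=
  ξ.toDerivation (pf a) - lam • pf a - (ad k A a ^ (p - 1)) (ξ.toDerivation a)

theorem kappa_eq_toLieDerivation (ξ : ConformalDerivation k A lam) (hp : 2 ≤ p) (pf : A → A)
    (a : A) : ξ.kappa p pf a =
      ξ.toLieDerivation (pf a) - (ad k A a ^ (p - 1)) (ξ.toLieDerivation a) := by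
  have toLieDerivation_apply (x : A) : ξ.toLieDerivation x = ξ.toDerivation x - lam • x := rfl
  have ad_pow_self : (ad k A a ^ (p - 1)) a = 0 := by
    obtain ⟨n, rfl⟩ := Nat.exists_eq_add_of_le' hp
    rw [Nat.add_succ_sub_one, pow_succ, Module.End.mul_apply, ad_apply, lie_self, map_zero]
  rw [kappa, toLieDerivation_apply, toLieDerivation_apply, map_sub, map_smul, ad_pow_self,
    smul_zero, sub_zero]

end Definitions

variable [Field k] [PoissonAlgebra k A] [CharP k p] [Fact p.Prime] {lam : k} {pf : A → A}

theorem kappa_add (ξ : ConformalDerivation k A lam) (hpf : IsRestrictedPoisson k p pf) (a b : A) :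
    ξ.kappa p pf (a + b) = ξ.kappa p pf a + ξ.kappa p pf b := by
  have hp : 2 ≤ p := (Fact.out : p.Prime).two_le
  rw [ξ.kappa_eq_toLieDerivation hp, ξ.kappa_eq_toLieDerivation hp,
    ξ.kappa_eq_toLieDerivation hp, hpf.map_add a b _ (isLval_jacobson a b), map_add, map_add,
    lieDerivation_jacobson]
  abel

theorem lie_kappa (ξ : ConformalDerivation k A lam) (hpf : IsRestrictedPoisson k p pf) (a g : A) :
    ⁅ξ.kappa p pf a, g⁆ = 0 := by
  rw [ξ.kappa_eq_toLieDerivation (Fact.out : p.Prime).two_le]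
  exact lie_lieDerivation_sub_ad_pow_eq_zero ξ.toLieDerivation (hpf.lie_map a) g

theorem kappa_mul_self (ξ : ConformalDerivation k A lam) (hpf : IsRestrictedPoisson k p pf)
    (hp : p ≠ 2) (c : A) : ξ.kappa p pf (c * c) = 2 * c ^ p * ξ.kappa p pf c := by
  have pf_mul_self : pf (c * c) = c ^ p * pf c + c ^ p * pf c := by
    rw [hpf.map_mul c c 0 (isPval_zero_of_lie_eq_zero hp (lie_self c)), add_zero, mul_comm (pf c)]
  have map_pow_mul (x : A) : ξ.toDerivation (c ^ p * x) = c ^ p * ξ.toDerivation x := by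
    rw [Derivation.leibniz, Derivation.leibniz_pow, nsmul_eq_mul, natCast_char_of_algebra k,
      zero_mul, smul_zero, add_zero, smul_eq_mul]
  have two_mul_pow : (c + c) ^ p = c ^ p + c ^ p :=
    add_pow_char_of_commute_of_algebra k (Commute.all c c)
  have ad_pow : (ad k A (c * c) ^ (p - 1)) (ξ.toDerivation (c * c)) =
      (c + c) ^ p * (ad k A c ^ (p - 1)) (ξ.toDerivation c) := by
    have lie_two_mul : ⁅c, c + c⁆ = 0 := by rw [lie_add, lie_self, add_zero]
    have map_mul_self : ξ.toDerivation (c * c) = (c + c) * ξ.toDerivation c := by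
      rw [Derivation.leibniz, smul_eq_mul]
      ring
    rw [ad_mul_self_pow, map_mul_self, ad_pow_mul_of_lie_eq_zero lie_two_mul, ← mul_assoc,
      ← pow_succ, Nat.sub_add_cancel (Fact.out : p.Prime).one_le]
  rw [kappa, kappa, pf_mul_self, ad_pow, two_mul_pow, map_add, map_pow_mul, smul_add,
    ← mul_smul_comm]
  ring

end ConformalDerivation

theorem map_mul_of_map_mul_self {R : Type*} [CommRing R] {κ φ : R → R}
    (hκ : ∀ a b, κ (a + b) = κ a + κ b) (hφ : ∀ a b, φ (a + b) = φ a + φ b)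
    (two_regular : IsRegular (2 : R)) (h : ∀ c, κ (c * c) = 2 * φ c * κ c) (a b : R) :
    κ (a * b) = φ a * κ b + φ b * κ a := by
  have expand : κ ((a + b) * (a + b)) = κ (a * a) + 2 * κ (a * b) + κ (b * b) := by
    rw [add_mul, mul_add, mul_add, hκ, hκ, hκ, mul_comm b a]
    ring
  apply two_regular.left
  rw [h, h, h, hκ, hφ] at expand
  linear_combination -expand

theorem ConformalDerivation.kappa_mul [Field k] [PoissonAlgebra k A] [CharP k p] [Fact p.Prime]
    {lam : k} {pf : A → A} (ξ : ConformalDerivation k A lam) (hpf : IsRestrictedPoisson k p pf)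
    (hp : p ≠ 2) (a b : A) :
    ξ.kappa p pf (a * b) = a ^ p * ξ.kappa p pf b + b ^ p * ξ.kappa p pf a := by
  have isUnit_two : IsUnit (2 : A) := by
    simpa only [map_ofNat] using (two_ne_zero_of_char_ne_two k hp).isUnit.map (algebraMap k A)
  exact map_mul_of_map_mul_self (φ := (· ^ p)) (ξ.kappa_add hpf)
    (fun x y => add_pow_char_of_commute_of_algebra k (Commute.all x y)) isUnit_two.isRegular
    (ξ.kappa_mul_self hpf hp) a b

end ConformalDerivation

/-- Let `A` be a restricted Poisson algebra over a field `k` of characteristic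
`p > 2`, and let `ξ` be a conformal derivation of weight `λ`:
`ξ{x,y} = {ξx, y} + {x, ξy} - λ{x,y}`.  Then
`κ(a) = (ξ - λ·id)(a^[p]) - (ad a)^(p-1)(ξ a)` is additive, satisfies
`κ(ab) = a^p κ(b) + b^p κ(a)`, and takes values in the Poisson center. -/
theorem statement7 {k A : Type*} [Field k] [CommRing A] [Algebra k A]
    {p : ℕ} (hp : p.Prime) (hp2 : 2 < p) [CharP k p]
    (bra : A → A → A)
    -- Poisson algebra axioms for the bracket
    (hbadd : ∀ x y z : A, bra (x + y) z = bra x z + bra y z)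
    (hbsmul : ∀ (c : k) (x y : A), bra (c • x) y = c • bra x y)
    (hbanti : ∀ x y : A, bra x y = - bra y x)
    (hbjac : ∀ x y z : A, bra x (bra y z) = bra (bra x y) z + bra y (bra x z))
    (hbleib : ∀ x y z : A, bra x (y * z) = bra x y * z + y * bra x z)
    -- the restricted structure x ↦ pf x = x^[p]
    (pf : A → A)
    (hres1 : ∀ x y : A, bra (pf x) y = (fun z => bra x z)^[p] y)
    (hres2 : ∀ (c : k) (x : A), pf (c • x) = c ^ p • pf x)
    (hresL : ∀ x y w : A, IsLval k p (0 : A) bra x y w →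
      pf (x + y) = pf x + pf y + w)
    (hresP : ∀ x y w : A, IsPval k p (0 : A) bra x y w →
      pf (x * y) = x ^ p * pf y + pf x * y ^ p + w)
    -- the conformal derivation ξ of weight lam
    (lam : k) (ξ : A → A)
    (hξadd : ∀ x y : A, ξ (x + y) = ξ x + ξ y)
    (hξsmul : ∀ (c : k) (x : A), ξ (c • x) = c • ξ x)
    (hξmul : ∀ x y : A, ξ (x * y) = ξ x * y + x * ξ y)
    (hconf : ∀ x y : A, ξ (bra x y) = bra (ξ x) y + bra x (ξ y) - lam • bra x y) :
    -- κ(a) := (ξ - λ·id)(a^[p]) - (ad a)^(p-1)(ξ a)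
    (∀ a b : A,
        (ξ (pf (a + b)) - lam • pf (a + b) - (fun z => bra (a + b) z)^[p - 1] (ξ (a + b)))
          = (ξ (pf a) - lam • pf a - (fun z => bra a z)^[p - 1] (ξ a))
            + (ξ (pf b) - lam • pf b - (fun z => bra b z)^[p - 1] (ξ b))) ∧
    (∀ a b : A,
        (ξ (pf (a * b)) - lam • pf (a * b) - (fun z => bra (a * b) z)^[p - 1] (ξ (a * b)))
          = a ^ p * (ξ (pf b) - lam • pf b - (fun z => bra b z)^[p - 1] (ξ b))
            + b ^ p * (ξ (pf a) - lam • pf a - (fun z => bra a z)^[p - 1] (ξ a))) ∧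
    (∀ a g : A,
        bra (ξ (pf a) - lam • pf a - (fun z => bra a z)^[p - 1] (ξ a)) g = 0) := by
  have := Fact.mk hp
  let _ : PoissonRing A :=
    { ‹CommRing A› with
      bracket := bra
      add_lie := hbadd
      lie_add := fun x y z => by rw [hbanti, hbadd, neg_add, ← hbanti, ← hbanti]
      lie_self := fun x => eq_zero_of_eq_neg_of_module k hp2.ne' (hbanti x x)
      leibniz_lie := hbjac
      lie_mul := hbleib }
  let _ : PoissonAlgebra k A :=
    { ‹Algebra k A› with
      lie_smul := fun c x y => by
        rw [← lie_skew, ← lie_skew x, smul_neg]; exact congrArg _ (hbsmul c y x) }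
  let ξ' : ConformalDerivation k A lam :=
    { Derivation.mk' ⟨⟨ξ, hξadd⟩, hξsmul⟩ fun x y => by
        simpa [mul_comm, add_comm] using hξmul x y with
      map_lie := hconf }
  have ad_pow (n : ℕ) (x y : A) : (fun z => bra x z)^[n] y = (LieAlgebra.ad k A x ^ n) y :=
    (Module.End.pow_apply (LieAlgebra.ad k A x) n y).symm
  have hpf : IsRestrictedPoisson k p pf :=
    ⟨fun x y => (hres1 x y).trans (ad_pow p x y), hres2, hresL, hresP⟩
  simp only [ad_pow]
  exact ⟨ξ'.kappa_add hpf, ξ'.kappa_mul hpf hp2.ne', ξ'.lie_kappa hpf⟩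
end

section
/- Let A be a restricted quantized algebra over a field k of characteristic p > 2 (an associative k[[h]]-algebra with bracket {−,−} satisfying h{a,b} = ab − ba, equipped with a restricted operation x ↦ x^{[p]} satisfying h^{[p]} = h and (xy)^{[p]} = x^p y^{[p]} + x^{[p]} y^p − h^{p-1} x^{[p]} y^{[p]} + P(x,y)). Then for every x ∈ A, (hx)^{[p]} = h x^p. -/
/-!
Call a decreasing filtration `F 0 ⊇ F 1 ⊇ …` of a ring of characteristic `p` almost commutative if
`F m * F n ⊆ F (m + n)` and `[F m, F n] ⊆ F (m + n + 1)`. In the polynomial ring over such a ring,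
`(f ^ p)' = (ad f) ^ (p - 1) f'`; comparing coefficients for `f = a X + b` yields
`(a + b) ^ p ≡ a ^ p + b ^ p` modulo `F (p - 1)` for `a, b ∈ F 0`. Hence `x y` and `y x` have
congruent `p`-th powers, and computing the `p`-th power of `(x + y) (x + y)` in two ways gives
`2 (x y) ^ p ≡ 2 x ^ p y ^ p`; for `p = 2`, directly `(x y) ^ 2 - x ^ 2 y ^ 2 = x [y, x] y`.

In the free quantized algebra, let `F n` consist of the `h ^ n * r` with `r` evaluable at `(h, x)`
and, when `n > 0`, of value `0`. Values at `(h, x)` Poisson-commute, so brackets evaluate to `0`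
and `F` is almost commutative. Therefore `(x y) ^ p - x ^ p y ^ p = h ^ (p - 1) P` with
`P(h, x) = 0`, and the product rule reduces to
`(h x)^[p] = h ^ p x^[p] + h x ^ p - h ^ (p - 1) h x^[p] = h x ^ p`.
-/

section

open Polynomial LieAlgebra

attribute [local instance] LieRing.ofAssociativeRing

section PrimeCharacteristic

variable {R : Type*} [Ring R] {p : ℕ}

lemma natCast_choose_prime_sub_one [CharP R p] (hp : p.Prime) {m : ℕ} (hm : m < p) :
    ((p - 1).choose m : R) = (-1) ^ m := by
  induction m with
  | zero => simp
  | succ m ih =>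
    have hpascal : ((p - 1).choose m : R) + (p - 1).choose (m + 1) = 0 := by
      rw [← Nat.cast_add, ← Nat.choose_succ_succ, Nat.succ_eq_add_one,
        Nat.sub_add_cancel hp.one_le, CharP.cast_eq_zero_iff R p]
      exact hp.dvd_choose_self m.succ_ne_zero hm
    rw [ih (by lia)] at hpascal
    rw [pow_succ, mul_neg_one, neg_eq_of_add_eq_zero_right hpascal]

lemma sub_pow_prime_sub_one_of_commute [CharP R p] (hp : p.Prime) {x y : R} (hxy : Commute x y) :
    (x - y) ^ (p - 1) = ∑ i ∈ Finset.range p, x ^ i * y ^ (p - 1 - i) := by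
  rw [sub_eq_add_neg, hxy.neg_right.add_pow, Nat.sub_add_cancel hp.one_le]
  refine Finset.sum_congr rfl fun i hi => ?_
  have hi : i ≤ p - 1 := Nat.le_sub_one_of_lt (Finset.mem_range.1 hi)
  have hsign : (-1 : R) ^ (p - 1 - i) * (-1) ^ (p - 1 - i) = 1 := by
    rw [← pow_add, Even.neg_one_pow ⟨_, rfl⟩]
  rw [← Nat.choose_symm hi, natCast_choose_prime_sub_one hp (by have := hp.pos; lia), mul_assoc,
    neg_pow, ((Commute.neg_one_left _).pow_left _).eq, mul_assoc, hsign, mul_one]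

variable {k : Type*} [Field k] [Algebra k R] [Nontrivial R] [CharP k p]

lemma ad_pow_prime_sub_one_apply (hp : p.Prime) (f g : R) :
    (ad k R f ^ (p - 1)) g = ∑ i ∈ Finset.range p, f ^ i * (g * f ^ (p - 1 - i)) := by
  have : CharP (Module.End k R) p := charP_of_injective_algebraMap' k p
  rw [ad_eq_lmul_left_sub_lmul_right, Pi.sub_apply,
    sub_pow_prime_sub_one_of_commute hp (LinearMap.commute_mulLeft_right f f)]
  simp [LinearMap.pow_mulLeft, LinearMap.pow_mulRight]

lemma ad_pow_prime (hp : p.Prime) (f : R) : ad k R f ^ p = ad k R (f ^ p) := by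
  have : CharP (Module.End k R) p := charP_of_injective_algebraMap' k p
  have : Fact p.Prime := ⟨hp⟩
  simp only [ad_eq_lmul_left_sub_lmul_right, Pi.sub_apply,
    sub_pow_char_of_commute _ (LinearMap.commute_mulLeft_right f f),
    LinearMap.pow_mulLeft, LinearMap.pow_mulRight]

end PrimeCharacteristic

section NoncommutativePolynomial

variable {R : Type*} [Ring R]

lemma derivative_pow_eq_sum (f : R[X]) (n : ℕ) :
    derivative (f ^ n) = ∑ i ∈ Finset.range n, f ^ i * (derivative f * f ^ (n - 1 - i)) := by
  induction n with
  | zero => simp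
  | succ n ih =>
    rw [pow_succ', derivative_mul, ih, Finset.sum_range_succ', Finset.mul_sum, add_comm]
    congr 1
    · refine Finset.sum_congr rfl fun i _ => ?_
      rw [pow_succ', mul_assoc, show n + 1 - 1 - (i + 1) = n - 1 - i by lia]
    · simp

lemma derivative_pow_prime {k : Type*} [Field k] [Algebra k R] [Nontrivial R] {p : ℕ} [CharP k p]
    (hp : p.Prime) (f : R[X]) :
    derivative (f ^ p) = (ad k R[X] f ^ (p - 1)) (derivative f) := by
  rw [derivative_pow_eq_sum, ad_pow_prime_sub_one_apply hp]

lemma eval_one_pow (f : R[X]) (n : ℕ) : (f ^ n).eval 1 = f.eval 1 ^ n :=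
  map_pow (eval₂RingHom' (RingHom.id R) 1 fun _ => Commute.one_right _) f n

lemma add_pow_sub_pow_sub_pow_eq_sum_coeff (a b : R) {n : ℕ} (hn : 0 < n) :
    (a + b) ^ n - a ^ n - b ^ n =
      ∑ i ∈ Finset.range (n - 1), ((C a * X + C b) ^ n).coeff (i + 1) := by
  obtain ⟨m, rfl⟩ : ∃ m, n = m + 1 := ⟨n - 1, by lia⟩
  set f : R[X] := C a * X + C b with hf
  have hdeg : (f ^ (m + 1)).natDegree < m + 1 + 1 := by
    have := natDegree_pow_le_of_le (m + 1) (natDegree_linear_le : f.natDegree ≤ 1)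
    lia
  have hconst : (f ^ (m + 1)).coeff 0 = b ^ (m + 1) := by
    simpa [hf] using map_pow constantCoeff f (m + 1)
  have hlead : (f ^ (m + 1)).coeff (m + 1) = a ^ (m + 1) := by
    simpa [hf] using coeff_pow_of_natDegree_le (m := m + 1) (natDegree_linear_le : f.natDegree ≤ 1)
  have heval : (f ^ (m + 1)).eval 1 = (a + b) ^ (m + 1) := by
    simp [eval_one_pow, hf]
  rw [← heval, eval_eq_sum_range' hdeg, Finset.sum_range_succ, Finset.sum_range_succ', hconst,
    hlead]
  simp

end NoncommutativePolynomial

section CoeffSubmodule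

variable {k R : Type*} [Field k] [Ring R] [Algebra k R]

/-- The polynomials all of whose coefficients lie in `N`; it carries a filtration of `R` over to
`R[X]`. -/
def coeffSubmodule (N : Submodule k R) : Submodule k R[X] where
  carrier := {f | ∀ i, f.coeff i ∈ N}
  add_mem' hf hg i := by simpa using N.add_mem (hf i) (hg i)
  zero_mem' _ := by simp
  smul_mem' c _ hf i := by simpa using N.smul_mem c (hf i)

lemma derivative_mem_coeffSubmodule {N : Submodule k R} {f : R[X]} (hf : f ∈ coeffSubmodule N) :
    derivative f ∈ coeffSubmodule N := fun i => by
  rw [coeff_derivative, ← Nat.cast_succ, ← nsmul_eq_mul']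
  exact N.nsmul_mem (hf _) _

end CoeffSubmodule

/-- A decreasing multiplicative filtration whose associated graded ring is commutative. The ring
`F 0` is not required to contain `1`. -/
structure IsAlmostCommutative {k R : Type*} [Field k] [Ring R] [Algebra k R]
    (F : ℕ → Submodule k R) : Prop where
  antitone : Antitone F
  mul_mem {m n : ℕ} {a b : R} : a ∈ F m → b ∈ F n → a * b ∈ F (m + n)
  lie_mem {m n : ℕ} {a b : R} : a ∈ F m → b ∈ F n → ⁅a, b⁆ ∈ F (m + n + 1)

namespace IsAlmostCommutative

variable {k R : Type*} [Field k] [Ring R] [Algebra k R] {F : ℕ → Submodule k R} {p : ℕ}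

lemma mul_mem_left (hF : IsAlmostCommutative F) {n : ℕ} {a q : R} (ha : a ∈ F 0) (hq : q ∈ F n) :
    a * q ∈ F n :=
  zero_add n ▸ hF.mul_mem ha hq

lemma mul_mem_right (hF : IsAlmostCommutative F) {n : ℕ} {a q : R} (ha : a ∈ F 0) (hq : q ∈ F n) :
    q * a ∈ F n :=
  hF.mul_mem hq ha

lemma pow_mem (hF : IsAlmostCommutative F) {m n : ℕ} {a : R} (ha : a ∈ F m) (hn : n ≠ 0) :
    a ^ n ∈ F (n * m) := by
  induction n, Nat.one_le_iff_ne_zero.2 hn using Nat.le_induction with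
  | base => simpa using ha
  | succ n hle ih =>
    rw [pow_succ, Nat.succ_mul]
    exact hF.mul_mem (ih (by lia)) ha

lemma pow_mem_zero (hF : IsAlmostCommutative F) {n : ℕ} {a : R} (ha : a ∈ F 0) (hn : n ≠ 0) :
    a ^ n ∈ F 0 := by
  simpa using hF.pow_mem ha hn

lemma ad_pow_mem (hF : IsAlmostCommutative F) {a b : R} (ha : a ∈ F 0) (hb : b ∈ F 0) (n : ℕ) :
    (ad k R a ^ n) b ∈ F n := by
  induction n with
  | zero => simpa using hb
  | succ n ih =>
    rw [pow_succ', Module.End.mul_apply, ad_apply]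
    simpa using hF.lie_mem ha ih

lemma polynomial (hF : IsAlmostCommutative F) :
    IsAlmostCommutative fun n => coeffSubmodule (F n) where
  antitone m n hmn f hf i := hF.antitone hmn (hf i)
  mul_mem hf hg i := by
    rw [coeff_mul]
    exact Submodule.sum_mem _ fun ij _ => hF.mul_mem (hf ij.1) (hg ij.2)
  lie_mem {m n f g} hf hg i := by
    have hcoeff : ⁅f, g⁆.coeff i =
        ∑ ij ∈ Finset.HasAntidiagonal.antidiagonal i, ⁅f.coeff ij.1, g.coeff ij.2⁆ := by
      simp only [Ring.lie_def, coeff_sub, coeff_mul, Finset.sum_sub_distrib]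
      rw [← Finset.Nat.sum_antidiagonal_swap (f := fun ij => g.coeff ij.1 * f.coeff ij.2)]
      rfl
    rw [hcoeff]
    exact Submodule.sum_mem _ fun ij _ => hF.lie_mem (hf ij.1) (hg ij.2)

lemma mul_sq_smodEq (hF : IsAlmostCommutative F) {x y : R} (hx : x ∈ F 0) (hy : y ∈ F 0) :
    (x * y) ^ 2 ≡ x ^ 2 * y ^ 2 [SMOD F 1] := by
  have hlie : (x * y) ^ 2 - x ^ 2 * y ^ 2 = x * ⁅y, x⁆ * y := by
    rw [Ring.lie_def]
    noncomm_ring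
  rw [SModEq.sub_mem, hlie]
  exact hF.mul_mem_right hy (hF.mul_mem_left hx (hF.lie_mem hy hx))

variable [Nontrivial R] [CharP k p]

lemma coeff_pow_prime_mem (hF : IsAlmostCommutative F) (hp : p.Prime) {f : R[X]}
    (hf : f ∈ coeffSubmodule (F 0)) {i : ℕ} (hi : ¬ p ∣ i + 1) :
    (f ^ p).coeff (i + 1) ∈ F (p - 1) := by
  have hderiv : (derivative (f ^ p)).coeff i ∈ F (p - 1) := by
    rw [derivative_pow_prime (k := k) hp]
    exact hF.polynomial.ad_pow_mem hf (derivative_mem_coeffSubmodule hf) (p - 1) i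
  have hunit : ((i + 1 : ℕ) : k) ≠ 0 := by rwa [Ne, CharP.cast_eq_zero_iff k p]
  rwa [coeff_derivative, ← Nat.cast_succ, ← nsmul_eq_mul', ← Nat.cast_smul_eq_nsmul k,
    Submodule.smul_mem_iff _ hunit] at hderiv

lemma add_pow_prime_smodEq (hF : IsAlmostCommutative F) (hp : p.Prime) {a b : R}
    (ha : a ∈ F 0) (hb : b ∈ F 0) :
    (a + b) ^ p ≡ a ^ p + b ^ p [SMOD F (p - 1)] := by
  have hlinear : C a * X + C b ∈ coeffSubmodule (F 0) := by
    rintro (_ | _ | i) <;> simp [coeff_X, coeff_C, ha, hb]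
  rw [SModEq.sub_mem, ← sub_sub, add_pow_sub_pow_sub_pow_eq_sum_coeff a b hp.pos]
  refine Submodule.sum_mem _ fun i hi => hF.coeff_pow_prime_mem hp hlinear ?_
  exact Nat.not_dvd_of_pos_of_lt i.succ_pos (Nat.add_lt_of_lt_sub (Finset.mem_range.1 hi))

lemma mul_pow_prime_smodEq_swap (hF : IsAlmostCommutative F) (hp : p.Prime) {x y : R}
    (hx : x ∈ F 0) (hy : y ∈ F 0) :
    (x * y) ^ p ≡ (y * x) ^ p [SMOD F (p - 1)] := by
  have hlie : ⁅x, y⁆ ^ p ≡ 0 [SMOD F (p - 1)] := by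
    rw [SModEq.zero]
    exact hF.antitone (by lia) (hF.pow_mem (hF.lie_mem hx hy) hp.ne_zero)
  have hadd := hF.add_pow_prime_smodEq hp (hF.mul_mem_left hy hx)
    (hF.antitone (Nat.zero_le _) (hF.lie_mem hx hy))
  rw [Ring.lie_def, add_sub_cancel, ← Ring.lie_def] at hadd
  simpa using hadd.trans (SModEq.rfl.add hlie)

lemma pow_prime_mul_pow_prime_smodEq_swap (hF : IsAlmostCommutative F) (hp : p.Prime) {x y : R}
    (hx : x ∈ F 0) (hy : y ∈ F 0) :
    x ^ p * y ^ p ≡ y ^ p * x ^ p [SMOD F (p - 1)] := by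
  rw [SModEq.sub_mem, ← Ring.lie_def, ← ad_apply k, ← ad_pow_prime hp]
  exact hF.antitone (Nat.sub_le p 1) (hF.ad_pow_mem hx (hF.pow_mem_zero hy hp.ne_zero) p)

lemma add_pow_prime_mul_self_smodEq (hF : IsAlmostCommutative F) (hp : p.Prime) {x y : R}
    (hx : x ∈ F 0) (hy : y ∈ F 0) :
    (x + y) ^ p * (x + y) ^ p ≡ (x ^ p + y ^ p) * (x ^ p + y ^ p) [SMOD F (p - 1)] := by
  have hsum := SModEq.sub_mem.1 (hF.add_pow_prime_smodEq hp hx hy)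
  have hpow {z : R} (hz : z ∈ F 0) := hF.pow_mem_zero hz hp.ne_zero
  have hsplit (s m : R) : s * s - m * m = (s - m) * s + m * (s - m) := by noncomm_ring
  rw [SModEq.sub_mem, hsplit]
  exact add_mem (hF.mul_mem_right (hpow (add_mem hx hy)) hsum)
    (hF.mul_mem_left (add_mem (hpow hx) (hpow hy)) hsum)

lemma two_smul_mul_pow_prime_smodEq (hF : IsAlmostCommutative F) (hp : p.Prime) {x y : R}
    (hx : x ∈ F 0) (hy : y ∈ F 0) :
    (2 : k) • (x * y) ^ p ≡ (2 : k) • (x ^ p * y ^ p) [SMOD F (p - 1)] := by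
  have hadd {a b : R} (ha : a ∈ F 0) (hb : b ∈ F 0) := hF.add_pow_prime_smodEq hp ha hb
  have hmul {a b : R} (ha : a ∈ F 0) (hb : b ∈ F 0) : a * b ∈ F 0 := hF.mul_mem_left ha hb
  have hexpand : ((x + y) * (x + y)) ^ p ≡
      (x * x) ^ p + (x * y) ^ p + ((y * x) ^ p + (y * y) ^ p) [SMOD F (p - 1)] := by
    rw [add_mul, mul_add, mul_add]
    exact (hadd (add_mem (hmul hx hx) (hmul hx hy)) (add_mem (hmul hy hx) (hmul hy hy))).trans
      ((hadd (hmul hx hx) (hmul hx hy)).add (hadd (hmul hy hx) (hmul hy hy)))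
  have hsquare : ((x + y) * (x + y)) ^ p ≡
      (x ^ p + y ^ p) * (x ^ p + y ^ p) [SMOD F (p - 1)] := by
    rw [(Commute.refl (x + y)).mul_pow]
    exact hF.add_pow_prime_mul_self_smodEq hp hx hy
  have hcross : (x * y) ^ p + (y * x) ^ p ≡ x ^ p * y ^ p + y ^ p * x ^ p [SMOD F (p - 1)] := by
    have hsub := SModEq.sub_mem.1 (hexpand.symm.trans hsquare)
    rw [(Commute.refl x).mul_pow, (Commute.refl y).mul_pow, add_mul, mul_add, mul_add] at hsub
    rw [SModEq.sub_mem]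
    convert hsub using 1
    abel
  calc (2 : k) • (x * y) ^ p = (x * y) ^ p + (x * y) ^ p := two_smul k _
    _ ≡ (x * y) ^ p + (y * x) ^ p [SMOD F (p - 1)] :=
      SModEq.rfl.add (hF.mul_pow_prime_smodEq_swap hp hx hy)
    _ ≡ x ^ p * y ^ p + y ^ p * x ^ p [SMOD F (p - 1)] := hcross
    _ ≡ x ^ p * y ^ p + x ^ p * y ^ p [SMOD F (p - 1)] :=
      SModEq.rfl.add (hF.pow_prime_mul_pow_prime_smodEq_swap hp hx hy).symm
    _ = (2 : k) • (x ^ p * y ^ p) := (two_smul k _).symm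

lemma mul_pow_prime_smodEq (hF : IsAlmostCommutative F) (hp : p.Prime) {x y : R}
    (hx : x ∈ F 0) (hy : y ∈ F 0) :
    (x * y) ^ p ≡ x ^ p * y ^ p [SMOD F (p - 1)] := by
  obtain rfl | hp2 := eq_or_ne p 2
  · exact hF.mul_sq_smodEq hx hy
  · have hunit : (2 : k) ≠ 0 := CharP.cast_ne_zero_of_ne_of_prime k Nat.prime_two hp2
    have htwo := SModEq.sub_mem.1 (hF.two_smul_mul_pow_prime_smodEq hp hx hy)
    rwa [← smul_sub, Submodule.smul_mem_iff _ hunit, ← SModEq.sub_mem] at htwo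

end IsAlmostCommutative

/-- A `k`-bilinear Lie bracket on an associative algebra, linear over the element `h`, for which
every `{x, -}` is a derivation. -/
structure IsPoissonBracket (k : Type*) {A : Type*} [Field k] [Ring A] [Algebra k A]
    (h : A) (bra : A → A → A) : Prop where
  self (x : A) : bra x x = 0
  antisymm (x y : A) : bra x y = -bra y x
  add_left (x y z : A) : bra (x + y) z = bra x z + bra y z
  smul_left (c : k) (x y : A) : bra (c • x) y = c • bra x y
  mul_left (x y : A) : bra (h * x) y = h * bra x y
  jacobi (x y z : A) : bra x (bra y z) = bra (bra x y) z + bra y (bra x z)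
  leibniz (x y z : A) : bra x (y * z) = bra x y * z + y * bra x z

namespace IsPoissonBracket

variable {k A : Type*} [Field k] [Ring A] [Algebra k A] {h : A} {bra : A → A → A}

lemma add_right (hbra : IsPoissonBracket k h bra) (x y z : A) :
    bra x (y + z) = bra x y + bra x z := by
  rw [hbra.antisymm, hbra.add_left, neg_add, ← hbra.antisymm, ← hbra.antisymm]

lemma smul_right (hbra : IsPoissonBracket k h bra) (c : k) (x y : A) :
    bra x (c • y) = c • bra x y := by
  rw [hbra.antisymm, hbra.smul_left, ← smul_neg, ← hbra.antisymm]

lemma zero_left (hbra : IsPoissonBracket k h bra) (x : A) : bra 0 x = 0 := by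
  simpa using hbra.smul_left 0 0 x

lemma zero_right (hbra : IsPoissonBracket k h bra) (x : A) : bra x 0 = 0 := by
  simpa using hbra.smul_right 0 x 0

lemma one_right (hbra : IsPoissonBracket k h bra) (x : A) : bra x 1 = 0 := by
  simpa using hbra.leibniz x 1 1

lemma param_left (hbra : IsPoissonBracket k h bra) (x : A) : bra h x = 0 := by
  simpa [hbra.antisymm 1 x, hbra.one_right x] using hbra.mul_left 1 x

lemma param_right (hbra : IsPoissonBracket k h bra) (x : A) : bra x h = 0 := by
  rw [hbra.antisymm, hbra.param_left, neg_zero]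

lemma bracket_qEval_eq_zero (hbra : IsPoissonBracket k h bra) {a u v w : A} {q : Amb k}
    (hu : bra a u = 0) (hv : bra a v = 0) (hw : QEval k h bra u v q w) : bra a w = 0 := by
  induction hw with
  | X => exact hu
  | Y => exact hv
  | h => exact hbra.param_right a
  | add _ _ hx hy => rw [hbra.add_right, hx, hy, add_zero]
  | smul c _ hx => rw [hbra.smul_right, hx, smul_zero]
  | mul _ _ hx hy => rw [hbra.leibniz, hx, hy, zero_mul, mul_zero, add_zero]
  | bracket _ _ _ hx hy =>
    rw [hbra.jacobi, hx, hy, hbra.zero_left, hbra.zero_right, add_zero]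

lemma bracket_eq_zero_of_qEval (hbra : IsPoissonBracket k h bra) {u v w w' : A} {q q' : Amb k}
    (huv : bra u v = 0) (hw : QEval k h bra u v q w) (hw' : QEval k h bra u v q' w') :
    bra w w' = 0 := by
  have hvu : bra v u = 0 := by rw [hbra.antisymm, huv, neg_zero]
  have hwu : bra w u = 0 := by
    rw [hbra.antisymm, hbra.bracket_qEval_eq_zero (hbra.self u) huv hw, neg_zero]
  have hwv : bra w v = 0 := by
    rw [hbra.antisymm, hbra.bracket_qEval_eq_zero hvu (hbra.self v) hw, neg_zero]
  exact hbra.bracket_qEval_eq_zero hwu hwv hw'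

end IsPoissonBracket

section QuantizedPolynomial

variable {k A : Type*} [Field k] [Ring A] [Algebra k A] {h : A} {bra : A → A → A} {u v : A}

lemma commute_he (q : Amb k) : Commute (he k) q :=
  commute_X q

lemma lie_he_pow_mul (m n : ℕ) (a b : Amb k) :
    ⁅he k ^ m * a, he k ^ n * b⁆ = he k ^ (m + n) * ⁅a, b⁆ := by
  have hmul (m n : ℕ) (a b : Amb k) :
      he k ^ m * a * (he k ^ n * b) = he k ^ (m + n) * (a * b) := by
    rw [((commute_he a).pow_left n).symm.mul_mul_mul_comm, pow_add]
  rw [Ring.lie_def, hmul, hmul, add_comm n m, ← mul_sub, ← Ring.lie_def]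

lemma coeff_zero_lie_eq_zero {a b : Amb k} (ha : a.coeff 0 = 0) (hb : b.coeff 0 = 0) :
    ⁅a, b⁆.coeff 0 = 0 := by
  simp [Ring.lie_def, ha, hb]

lemma QEval.coeff_zero {q : Amb k} {w : A} (hq : QEval k h bra u v q w) : q.coeff 0 = 0 := by
  induction hq with
  | X => simp [Xe]
  | Y => simp [Ye]
  | h => simp [he]
  | add _ _ ha hb => simp [ha, hb]
  | smul c _ ha => simp [ha]
  | mul _ _ ha _ => simp [ha]
  | @bracket a b c _ _ _ _ hc ha hb =>
    rw [← coeff_X_mul c 0, ← he, hc]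
    simp [mul_coeff_one, ha, hb]

lemma QEval.exists_lie {a b : Amb k} {x y : A} (ha : QEval k h bra u v a x)
    (hb : QEval k h bra u v b y) :
    ∃ c, he k * c = ⁅a, b⁆ ∧ QEval k h bra u v c (bra x y) := by
  obtain ⟨c, hc⟩ := X_dvd_iff.2 (coeff_zero_lie_eq_zero ha.coeff_zero hb.coeff_zero)
  exact ⟨c, hc.symm, ha.bracket hb (hc.symm.trans (Ring.lie_def a b))⟩

variable (k h bra u v) in
/-- The filtration of the evaluable quantized polynomials whose `n`-th step, for `n > 0`, is `h ^ n`
times the kernel of evaluation at `(u, v)`, evaluation being the relation `QEval`. -/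
def evalFiltration (n : ℕ) : Submodule k (Amb k) where
  carrier := {q | ∃ r w, QEval k h bra u v r w ∧ (n ≠ 0 → w = 0) ∧ he k ^ n * r = q}
  add_mem' := by
    rintro _ _ ⟨r, w, hr, hw, rfl⟩ ⟨r', w', hr', hw', rfl⟩
    exact ⟨r + r', w + w', hr.add hr', fun hn => by rw [hw hn, hw' hn, add_zero], mul_add _ _ _⟩
  zero_mem' := ⟨(0 : k) • he k, (0 : k) • h, .smul 0 .h, fun _ => zero_smul k h, by simp⟩
  smul_mem' := by
    rintro c _ ⟨r, w, hr, hw, rfl⟩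
    exact ⟨c • r, c • w, hr.smul c, fun hn => by rw [hw hn, smul_zero], mul_smul_comm _ _ _⟩

lemma IsPoissonBracket.isAlmostCommutative_evalFiltration (hbra : IsPoissonBracket k h bra)
    (huv : bra u v = 0) : IsAlmostCommutative (evalFiltration k h bra u v) where
  antitone := antitone_nat_of_succ_le fun n => by
    rintro _ ⟨r, w, hr, hw, rfl⟩
    refine ⟨he k * r, h * w, .mul .h hr, fun _ => ?_, by rw [pow_succ, mul_assoc]⟩
    rw [hw n.succ_ne_zero, mul_zero]
  mul_mem := by
    rintro m n _ _ ⟨r, w, hr, hw, rfl⟩ ⟨r', w', hr', hw', rfl⟩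
    refine ⟨r * r', w * w', hr.mul hr', fun hmn => ?_, ?_⟩
    · obtain hm | hn : m ≠ 0 ∨ n ≠ 0 := by lia
      · rw [hw hm, zero_mul]
      · rw [hw' hn, mul_zero]
    · rw [((commute_he r).pow_left n).symm.mul_mul_mul_comm, pow_add]
  lie_mem := by
    rintro m n _ _ ⟨r, w, hr, -, rfl⟩ ⟨r', w', hr', -, rfl⟩
    obtain ⟨c, hc, hcw⟩ := hr.exists_lie hr'
    refine ⟨c, bra w w', hcw, fun _ => hbra.bracket_eq_zero_of_qEval huv hr hr', ?_⟩
    rw [lie_he_pow_mul, ← hc, pow_succ, mul_assoc]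

lemma QEval.mem_evalFiltration_zero {q : Amb k} {w : A} (hq : QEval k h bra u v q w) :
    q ∈ evalFiltration k h bra u v 0 :=
  ⟨q, w, hq, fun h0 => absurd rfl h0, by rw [pow_zero, one_mul]⟩

lemma IsPoissonBracket.isPval_zero (hbra : IsPoissonBracket k h bra) {p : ℕ} [CharP k p]
    (hp : p.Prime) (huv : bra u v = 0) : IsPval k p h bra u v 0 := by
  obtain ⟨P, w, hP, hw, hPeq⟩ := SModEq.sub_mem.1 <|
    (hbra.isAlmostCommutative_evalFiltration huv).mul_pow_prime_smodEq hp
      QEval.X.mem_evalFiltration_zero QEval.Y.mem_evalFiltration_zero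
  exact ⟨P, hPeq, hw (Nat.sub_ne_zero_of_lt hp.one_lt) ▸ hP⟩

end QuantizedPolynomial

lemma eq_zero_of_eq_neg_of_charP {k A : Type*} [Field k] [AddCommGroup A] [Module k A] {p : ℕ}
    [CharP k p] (hp2 : p ≠ 2) {a : A} (ha : a = -a) : a = 0 := by
  have htwo : (2 : k) • a = 0 := by rw [two_smul, ← eq_neg_iff_add_eq_zero.1 ha]
  exact (smul_eq_zero.1 htwo).resolve_left (CharP.cast_ne_zero_of_ne_of_prime k Nat.prime_two hp2)

end

theorem statement12_general {k A : Type*} [Field k] [Ring A] [Algebra k A] {p : ℕ} (hp : p.Prime)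
    [CharP k p] {h : A} {bra : A → A → A} (hbra : IsPoissonBracket k h bra) {pf : A → A}
    (hresh : pf h = h)
    (hresP : ∀ x y w : A, IsPval k p h bra x y w →
      pf (x * y) = x ^ p * pf y + pf x * y ^ p - h ^ (p - 1) * (pf x * pf y) + w) (x : A) :
    pf (h * x) = h * x ^ p := by
  have hprod := hresP h x 0 (hbra.isPval_zero hp (hbra.param_left x))
  rw [hresh, ← mul_assoc (h ^ (p - 1)), pow_sub_one_mul hp.ne_zero, add_zero] at hprod
  rw [hprod, add_sub_cancel_left]

/-- Let `A` be a restricted quantized algebra over a field `k` of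
characteristic `p > 2`: an associative `k[[h]]`-algebra with a bracket
satisfying `h·{a,b} = a*b - b*a`, equipped with a restricted operation
`x ↦ x^[p]` satisfying `h^[p] = h` and
`(xy)^[p] = x^p y^[p] + x^[p] y^p - h^(p-1) x^[p] y^[p] + P(x,y)`.
Then `(h·x)^[p] = h·x^p` for every `x ∈ A`. -/
theorem statement12 {k A : Type*} [Field k] [Ring A]
    [Algebra (PowerSeries k) A] [Algebra k A]
    [IsScalarTower k (PowerSeries k) A]
    {p : ℕ} (hp : p.Prime) (hp2 : 2 < p) [CharP k p]
    (h : A) (hdef : h = algebraMap (PowerSeries k) A PowerSeries.X)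
    (bra : A → A → A)
    -- quantized algebra axioms for the bracket
    (hbra : ∀ a b : A, h * bra a b = a * b - b * a)
    (hbadd : ∀ x y z : A, bra (x + y) z = bra x z + bra y z)
    (hbsmul : ∀ (c : k) (x y : A), bra (c • x) y = c • bra x y)
    (hbh : ∀ x y : A, bra (h * x) y = h * bra x y)
    (hbanti : ∀ x y : A, bra x y = - bra y x)
    (hbjac : ∀ x y z : A, bra x (bra y z) = bra (bra x y) z + bra y (bra x z))
    (hbleib : ∀ x y z : A, bra x (y * z) = bra x y * z + y * bra x z)
    -- the restricted structure x ↦ pf x = x^[p]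
    (pf : A → A)
    (hres1 : ∀ x y : A, bra (pf x) y = (fun z => bra x z)^[p] y)
    (hres2 : ∀ (c : k) (x : A), pf (c • x) = c ^ p • pf x)
    (hresL : ∀ x y w : A, IsLval k p h bra x y w →
      pf (x + y) = pf x + pf y + w)
    (hresh : pf h = h)
    (hresP : ∀ x y w : A, IsPval k p h bra x y w →
      pf (x * y) = x ^ p * pf y + pf x * y ^ p - h ^ (p - 1) * (pf x * pf y) + w) :
    ∀ x : A, pf (h * x) = h * x ^ p := by
  exact statement12_general hp ⟨fun a => eq_zero_of_eq_neg_of_charP (k := k) hp2.ne' (hbanti a a),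
    hbanti, hbadd, hbsmul, hbh, hbjac, hbleib⟩ hresh hresP
end
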